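/- Let (A, m) be a regular local ring of dimension n ≥ 2, let f₁, …, f_{n−1} ∈ m be a regular sequence, and set I = (f₁, …, f_{n−1}). Then for every integer r ≥ 2, the A-module A/(I^r + (f₁^{r−1})) has depth equal to 1. -/

import Mathlib

/-- The depth (with respect to the ideal `m`) of an `A`-module `M`: the supremum of the
lengths of `M`-regular sequences consisting of elements of `m`.  For a nonzero finitely
generated module over a Noetherian local ring this is the common length of all maximal
`M`-regular sequences contained in the maximal ideal. -/
noncomputable def regSeqDepth (A : Type*) [CommRing A] (m : Ideal A)
    (M : Type*) [AddCommGroup M] [Module A M] : ℕ :=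
  sSup {d : ℕ | ∃ rs : List A, rs.length = d ∧ (∀ x ∈ rs, x ∈ m) ∧
    RingTheory.Sequence.IsRegular M rs}

section Aux

universe u

open RingTheory.Sequence Pointwise CategoryTheory Abelian


theorem aux_step {A M : Type*} [CommRing A] [AddCommGroup M] [Module A M]
    (K J : Submodule A M) (f x : A) (hKJ : K ≤ J)
    (hf : ∀ a : M, f • a ∈ K → a ∈ K)
    (hx : ∀ a : M, x • a ∈ K ⊔ f • (⊤ : Submodule A M) → a ∈ K ⊔ f • (⊤ : Submodule A M))
    (hJ : ∀ a : M, x • a ∈ J → a ∈ J) (a : M) (ha : x • a ∈ K ⊔ f • J) :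
    a ∈ K ⊔ f • J := by
  have h1 : a ∈ K ⊔ f • (⊤ : Submodule A M) :=
    hx a (sup_le_sup_left (by rw [← Submodule.ideal_span_singleton_smul, ← Submodule.ideal_span_singleton_smul]; exact Submodule.smul_mono le_rfl le_top) K ha)
  obtain ⟨k, hk, z, hz, rfl⟩ := Submodule.mem_sup.mp h1
  obtain ⟨b, -, rfl⟩ := (Submodule.mem_smul_pointwise_iff_exists _ _ _).mp hz
  obtain ⟨k', hk', z', hz', e⟩ := Submodule.mem_sup.mp ha
  obtain ⟨j, hj, rfl⟩ := (Submodule.mem_smul_pointwise_iff_exists _ _ _).mp hz'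
  have h2 : f • (x • b - j) ∈ K := by
    have : f • (x • b - j) = k' - x • k := by
      rw [smul_add] at e
      rw [smul_sub, smul_comm f x b, sub_eq_sub_iff_add_eq_add, add_comm, ← e]
    rw [this]
    exact K.sub_mem hk' (K.smul_mem _ hk)
  have h3 : x • b ∈ J := by
    have := J.add_mem (hKJ (hf _ h2)) hj
    simpa using this
  exact Submodule.add_mem_sup hk (Submodule.smul_mem_pointwise_smul _ _ _ (hJ b h3))

/-- `x` regular on `M/I^k M` in the quotient by `f`. -/
theorem aux_quot {A M : Type*} [CommRing A] [AddCommGroup M] [Module A M]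
    (I : Ideal A) (f x : A)
    (h : ∀ a : QuotSMulTop f M, x • a ∈ I • (⊤ : Submodule A (QuotSMulTop f M)) →
      a ∈ I • (⊤ : Submodule A (QuotSMulTop f M))) (a : M)
    (ha : x • a ∈ I • (⊤ : Submodule A M) ⊔ f • (⊤ : Submodule A M)) :
    a ∈ I • (⊤ : Submodule A M) ⊔ f • (⊤ : Submodule A M) := by
  have key : ∀ b : M, b ∈ I • (⊤ : Submodule A M) ⊔ f • (⊤ : Submodule A M) ↔
      (f • (⊤ : Submodule A M)).mkQ b ∈ I • (⊤ : Submodule A (QuotSMulTop f M)) := by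
    intro b
    have e : I • (⊤ : Submodule A (QuotSMulTop f M)) =
        (I • (⊤ : Submodule A M)).map (f • (⊤ : Submodule A M)).mkQ := by
      rw [Submodule.map_smul'', Submodule.map_top, Submodule.range_mkQ]
    rw [e, ← Submodule.mem_comap, Submodule.comap_map_eq, Submodule.ker_mkQ]
  rw [key] at ha ⊢
  exact h _ (by simpa using ha)

theorem aux_pow_sup {A : Type*} [CommRing A] (f : A) (I : Ideal A) (k : ℕ) :
    (Ideal.span {f} ⊔ I) ^ (k+1) = I ^ (k+1) ⊔ Ideal.span {f} * (Ideal.span {f} ⊔ I) ^ k := by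
  apply le_antisymm
  · induction k with
    | zero => simp
    | succ k ih =>
      rw [pow_succ' _ (k+1), Ideal.sup_mul]
      refine sup_le le_sup_right ?_
      refine (Ideal.mul_mono_right ih).trans ?_
      rw [Ideal.mul_sup, ← pow_succ']
      refine sup_le le_sup_left (le_sup_of_le_right ?_)
      rw [mul_left_comm]
      refine Ideal.mul_mono_right ?_
      rw [pow_succ' _ k]
      exact Ideal.mul_mono_left le_sup_right
  · refine sup_le (Ideal.pow_right_mono le_sup_right _) ?_
    rw [pow_succ']
    exact Ideal.mul_mono_left le_sup_left

theorem aux_pow {A : Type*} [CommRing A] [IsNoetherianRing A] [IsLocalRing A] (fs : List A) :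
    ∀ {M : Type*} [AddCommGroup M] [Module A M] [Module.Finite A M] (x : A)
    (_ : ∀ y ∈ fs ++ [x], y ∈ IsLocalRing.maximalIdeal A)
    (_ : IsWeaklyRegular M (fs ++ [x])) (k : ℕ) (a : M),
    x • a ∈ (Ideal.ofList fs) ^ k • (⊤ : Submodule A M) →
    a ∈ (Ideal.ofList fs) ^ k • (⊤ : Submodule A M) := by
  induction fs with
  | nil =>
    intro M _ _ _ x _ h k a ha
    cases k with
    | zero => simp
    | succ k =>
      rw [Ideal.ofList_nil, Ideal.bot_pow (by simp)] at *
      rw [Submodule.bot_smul, Submodule.mem_bot] at *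
      have h' := (isWeaklyRegular_singleton_iff M x).mp (by simpa using h)
      exact h' (by simpa using ha)
  | cons f fs ih =>
    intro M _ _ _ x hmem h k
    induction k with
    | zero => simp
    | succ k ihk =>
      intro a ha
      have e : (Ideal.ofList (f :: fs)) ^ (k + 1) • (⊤ : Submodule A M) =
          (Ideal.ofList fs) ^ (k + 1) • (⊤ : Submodule A M) ⊔
            f • ((Ideal.ofList (f :: fs)) ^ k • (⊤ : Submodule A M)) := by
        rw [← Submodule.ideal_span_singleton_smul, ← smul_assoc, ← Submodule.sup_smul]
        congr 1
        rw [Ideal.ofList_cons, smul_eq_mul, aux_pow_sup]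
      rw [e] at ha ⊢
      have hperm : IsWeaklyRegular M (fs ++ [f]) := by
        have h1 : IsWeaklyRegular M (f :: fs) := ((isWeaklyRegular_append_iff M _ _).mp h).1
        refine IsLocalRing.isWeaklyRegular_of_perm_of_subset_maximalIdeal h1
          (List.perm_append_singleton f fs).symm (fun y hy => hmem y (by simp_all; tauto))
      refine aux_step _ _ f x ?_ (ih f (fun y hy => hmem y (by simp at hy ⊢; tauto)) hperm (k+1))
        (aux_quot _ f x ?_) ihk a ha
      · refine Submodule.smul_mono_left ?_
        refine (Ideal.pow_le_pow_right (Nat.le_succ k)).trans (Ideal.pow_right_mono ?_ k)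
        simp
      · exact ih x (fun y hy => hmem y (by simp at hy ⊢; tauto))
          ((isWeaklyRegular_cons_iff M f _).mp h).2 (k+1)

theorem aux_final {A : Type*} [CommRing A] [IsNoetherianRing A] [IsLocalRing A]
    (f : A) (fs : List A) (x : A)
    (hmem : ∀ y ∈ f :: fs ++ [x], y ∈ IsLocalRing.maximalIdeal A)
    (h : IsWeaklyRegular A (f :: fs ++ [x])) (t : ℕ) : ∀ (r : ℕ) (a : A),
    x • a ∈ (Ideal.ofList (f :: fs)) ^ r ⊔ Ideal.span {f ^ t} →
    a ∈ (Ideal.ofList (f :: fs)) ^ r ⊔ Ideal.span {f ^ t} := by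
  induction t with
  | zero => simp
  | succ t iht =>
    intro r a ha
    cases r with
    | zero => simp
    | succ k =>
      have e : (Ideal.ofList (f :: fs)) ^ (k + 1) ⊔ Ideal.span {f ^ (t+1)} =
          (Ideal.ofList fs) ^ (k + 1) ⊔
            f • ((Ideal.ofList (f :: fs)) ^ k ⊔ Ideal.span {f ^ t}) := by
        rw [← Submodule.ideal_span_singleton_smul, smul_eq_mul, Ideal.ofList_cons, aux_pow_sup,
          Ideal.mul_sup, Ideal.span_singleton_mul_span_singleton, pow_succ' f, sup_assoc]
      rw [e] at ha ⊢
      have hperm : IsWeaklyRegular A (fs ++ [f]) := by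
        have h1 : IsWeaklyRegular A (f :: fs) := ((isWeaklyRegular_append_iff A _ _).mp h).1
        refine IsLocalRing.isWeaklyRegular_of_perm_of_subset_maximalIdeal h1
          (List.perm_append_singleton f fs).symm (fun y hy => hmem y (by simp_all; tauto))
      refine aux_step _ _ f x ?_ ?_ ?_ (iht k) a ha
      · refine le_sup_of_le_left ?_
        refine (Ideal.pow_le_pow_right (Nat.le_succ k)).trans (Ideal.pow_right_mono ?_ k)
        simp
      · simpa using aux_pow (M := A) fs f (fun y hy => hmem y (by simp at hy ⊢; tauto)) hperm (k+1)
      · have := aux_quot (M := A) ((Ideal.ofList fs) ^ (k + 1)) f x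
          (aux_pow fs x (fun y hy => hmem y (by simp at hy ⊢; tauto))
          ((isWeaklyRegular_cons_iff A f _).mp h).2 (k+1))
        simpa using this


theorem aux_ext {A : Type u} [CommRing A] (N : ModuleCat.{u} A) (fs : List A) :
    ∀ (M : Type u) [AddCommGroup M] [Module A M] (n : ℕ),
    IsWeaklyRegular M fs →
    (∀ i < n + fs.length, Subsingleton (Ext N (ModuleCat.of A M) i)) →
    ∃ (M' : Type u) (_ : AddCommGroup M') (_ : Module A M')
      (_ : M' ≃ₗ[A] (M ⧸ (Ideal.ofList fs • (⊤ : Submodule A M)))),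
      ∀ i < n, Subsingleton (Ext N (ModuleCat.of A M') i) := by
  induction fs with
  | nil =>
    intro M _ _ n _ h
    exact ⟨M, inferInstance, inferInstance,
      (Submodule.quotEquivOfEqBot _ (by simp)).symm, by simpa using h⟩
  | cons x fs ih =>
    intro M _ _ n hreg h
    rw [isWeaklyRegular_cons_iff] at hreg
    obtain ⟨M', i1, i2, e, h'⟩ := ih (QuotSMulTop x M) n hreg.2 (by
      intro i hi
      have zero1 := AddCommGrpCat.isZero_of_iff_subsingleton.mpr (h i (by simp; omega))
      have zero2 := AddCommGrpCat.isZero_of_iff_subsingleton.mpr (h (i + 1) (by simp; omega))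
      exact AddCommGrpCat.subsingleton_of_isZero <| ShortComplex.Exact.isZero_of_both_zeros
        ((Ext.covariant_sequence_exact₃' N
          (IsSMulRegular.smulShortComplex_shortExact (M := ModuleCat.of A M) hreg.1)) i (i + 1) rfl)
        (zero1.eq_zero_of_src _) (zero2.eq_zero_of_tgt _))
    exact ⟨M', i1, i2, e.trans
      (Submodule.quotOfListConsSMulTopEquivQuotSMulTopInner M x fs).symm, h'⟩

theorem aux_exists {A : Type u} [CommRing A] [IsNoetherianRing A] [IsLocalRing A]
    (rs fs : List A) (hr : ∀ y ∈ rs, y ∈ IsLocalRing.maximalIdeal A)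
    (hrs : IsRegular A rs) (hfs : IsRegular A fs) (hlen : rs.length = fs.length + 1) :
    ∃ x ∈ IsLocalRing.maximalIdeal A, IsWeaklyRegular A (fs ++ [x]) := by
  set k := IsLocalRing.maximalIdeal A with hk
  have lt1 : ∀ (M : Type u) [AddCommGroup M] [Module A M] [Module.Finite A M] [Nontrivial M],
      k • (⊤ : Submodule A M) < ⊤ := by
    intro M _ _ _ _
    exact (Submodule.top_ne_ideal_smul_of_le_jacobson_annihilator
      (IsLocalRing.maximalIdeal_le_jacobson _)).symm.lt_top
  have h1 := ((ModuleCat.exists_isRegular_tfae k rs.length (ModuleCat.of A A) (lt1 A)).out 1 3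
    rfl rfl).mpr ⟨rs, rfl, hr, hrs⟩
  obtain ⟨M', i1, i2, e, h'⟩ := aux_ext _ fs A 1 hfs.1 (by
    intro i hi; exact h1 i (by omega))
  have : Nontrivial (A ⧸ (Ideal.ofList fs • (⊤ : Submodule A A))) :=
    hfs.quot_ofList_smul_nontrivial ⊤
  have : Nontrivial M' := e.toEquiv.nontrivial
  have : Module.Finite A M' := Module.Finite.equiv e.symm
  obtain ⟨xs, hl, hx, hreg⟩ :=
    ((ModuleCat.exists_isRegular_tfae k 1 (ModuleCat.of A M') (lt1 M')).out 1 3).mp h'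
  obtain ⟨x, rfl⟩ := List.length_eq_one_iff.mp hl
  exact ⟨x, hx x (by simp), (isWeaklyRegular_append_iff A _ _).mpr
    ⟨hfs.1, (e.isWeaklyRegular_congr _).mp hreg.1⟩⟩

theorem aux_erase {A : Type u} [CommRing A] [IsLocalRing A] (s : Finset A) (x : A)
    (hs : Ideal.span (s : Set A) = IsLocalRing.maximalIdeal A)
    (hx : x ∈ IsLocalRing.maximalIdeal A) (hx2 : x ∉ IsLocalRing.maximalIdeal A ^ 2) :
    ∃ t : Finset A, t.card + 1 = s.card ∧
      Ideal.span {x} ⊔ Ideal.span (t : Set A) = IsLocalRing.maximalIdeal A := by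
  classical
  have hx' := hx
  rw [← hs, Submodule.mem_span_finset] at hx'
  obtain ⟨c, -, hc⟩ := hx'
  have : ∃ i ∈ s, IsUnit (c i) := by
    by_contra! hcon
    apply hx2
    rw [← hc, pow_two]
    refine Ideal.sum_mem _ fun i hi => Ideal.mul_mem_mul (hcon i hi) ?_
    rw [← hs]; exact Ideal.subset_span hi
  obtain ⟨i, hi, hu⟩ := this
  refine ⟨s.erase i, Finset.card_erase_add_one hi, le_antisymm ?_ ?_⟩
  · refine sup_le ((Ideal.span_singleton_le_iff_mem _).mpr hx) ?_
    rw [← hs]; exact Ideal.span_mono (by simp)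
  · nth_rw 1 [← hs]
    rw [Ideal.span_le]
    intro j hj
    by_cases hji : j = i
    · subst hji
      rw [← Finset.add_sum_erase _ _ hi] at hc
      have : c j * j = x - ∑ l ∈ s.erase j, c l • l := by
        rw [← hc]; simp
      refine (Ideal.unit_mul_mem_iff_mem _ hu).mp ?_
      rw [this]
      refine Ideal.sub_mem _ (Ideal.mem_sup_left (Ideal.mem_span_singleton_self x))
        (Ideal.mem_sup_right (Ideal.sum_mem _ fun l hl => Ideal.mul_mem_left _ _
          (Ideal.subset_span hl)))
    · exact Ideal.mem_sup_right (Ideal.subset_span (by simpa using ⟨hj, hji⟩))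

theorem aux_regular (d : ℕ) : ∀ (A : Type u) [CommRing A] [IsNoetherianRing A] [IsLocalRing A],
    ringKrullDim A = d → (∃ s : Finset A, s.card = d ∧
      Ideal.span (s : Set A) = IsLocalRing.maximalIdeal A) →
    IsDomain A ∧ ∃ rs : List A, rs.length = d ∧ (∀ y ∈ rs, y ∈ IsLocalRing.maximalIdeal A) ∧
      IsRegular A rs := by
  classical
  induction d with
  | zero =>
    rintro A _ _ _ - ⟨s, hs, h⟩
    rw [Finset.card_eq_zero] at hs
    subst hs
    have hf : IsField A := IsLocalRing.isField_iff_maximalIdeal_eq.mpr (by simpa using h.symm)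
    exact ⟨hf.isDomain, [], rfl, by simp, IsRegular.nil _ _⟩
  | succ d ih =>
    rintro A _ _ _ hd ⟨s, hs, h⟩
    have hnf : IsLocalRing.maximalIdeal A ≠ ⊥ := by
      intro hb
      have := ringKrullDim_eq_zero_of_isField (IsLocalRing.isField_iff_maximalIdeal_eq.mpr hb)
      rw [this] at hd
      exact absurd hd (by norm_cast)
    have hht : (IsLocalRing.maximalIdeal A) ∉ minimalPrimes A := by
      intro hmin
      have h0 := IsLocalRing.maximalIdeal_height_eq_ringKrullDim (R := A)
      rw [Ideal.height_eq_zero_iff.mpr hmin, hd] at h0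
      exact absurd h0 (by norm_cast)
    obtain ⟨x, hx, hx2, hxp⟩ : ∃ x ∈ IsLocalRing.maximalIdeal A,
        x ∉ IsLocalRing.maximalIdeal A ^ 2 ∧ ∀ p ∈ minimalPrimes A, x ∉ p := by
      by_contra! hcon
      have := (Ideal.subset_union_prime_finite (I := IsLocalRing.maximalIdeal A)
        (s := insert (IsLocalRing.maximalIdeal A ^ 2) (minimalPrimes A)) (f := id)
        ((minimalPrimes.finite_of_isNoetherianRing A).insert _)
        (IsLocalRing.maximalIdeal A ^ 2) (IsLocalRing.maximalIdeal A ^ 2) (by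
          intro i hi h1 _
          exact (Set.mem_of_mem_insert_of_ne hi h1).1.1)).mp (by
          intro x hx
          simp only [Set.mem_iUnion]
          by_cases hx2 : x ∈ IsLocalRing.maximalIdeal A ^ 2
          · exact ⟨_, Set.mem_insert _ _, hx2⟩
          · obtain ⟨p, hp, hxp⟩ := hcon x hx hx2
            exact ⟨p, Set.mem_insert_of_mem _ hp, hxp⟩)
      obtain ⟨p, hp, hle⟩ := this
      rcases hp with rfl | hp
      · apply hnf
        refine Submodule.eq_bot_of_le_smul_of_le_jacobson_bot (IsLocalRing.maximalIdeal A) _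
          (IsNoetherian.noetherian _) ?_ (IsLocalRing.maximalIdeal_le_jacobson _)
        rw [smul_eq_mul, ← pow_two]; exact hle
      · have hpp : p.IsPrime := hp.1.1
        exact hht ((le_antisymm hle (IsLocalRing.le_maximalIdeal hpp.ne_top)) ▸ hp)
    obtain ⟨t, ht, hspan⟩ := aux_erase s x h hx hx2
    have hne : Ideal.span {x} ≠ ⊤ := by
      rw [Ne, Ideal.span_singleton_eq_top]; exact hx
    have : Nontrivial (A ⧸ Ideal.span {x}) := Ideal.Quotient.nontrivial_iff.mpr hne
    have hloc : IsLocalRing (A ⧸ Ideal.span {x}) :=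
      IsLocalRing.of_surjective' (Ideal.Quotient.mk (Ideal.span {x})) Ideal.Quotient.mk_surjective
    have hmap : (IsLocalRing.maximalIdeal A).map (Ideal.Quotient.mk (Ideal.span {x})) =
        IsLocalRing.maximalIdeal (A ⧸ Ideal.span {x}) := 
      IsLocalRing.map_maximalIdeal_of_surjective _ Ideal.Quotient.mk_surjective
    have hdim : ringKrullDim (A ⧸ Ideal.span {x}) = d := by
      have h1 := Module.supportDim_quotSMulTop_succ_eq_of_notMem_minimalPrimes_of_mem_maximalIdeal
        (R := A) (M := A) (x := x) (by
          rw [Module.annihilator_eq_bot.mpr inferInstance]; exact hxp) hx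
      rw [Module.supportDim_self_eq_ringKrullDim, hd] at h1
      have h2 : Module.supportDim A (QuotSMulTop x A) = ringKrullDim (A ⧸ Ideal.span {x}) := by
        rw [← Module.supportDim_quotient_eq_ringKrullDim]
        apply Module.supportDim_eq_of_equiv
        exact Submodule.quotEquivOfEq _ _ (by 
          rw [← Submodule.ideal_span_singleton_smul]; simp)
      rw [h2] at h1
      revert h1
      generalize ringKrullDim (A ⧸ Ideal.span {x}) = z
      intro h1
      rw [Nat.cast_add] at h1
      exact le_antisymm ((ENat.WithBot.add_le_add_natCast_right_iff (c := 1)).mp (by simpa using h1.le))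
        ((ENat.WithBot.add_le_add_natCast_right_iff (c := 1)).mp (by simpa using h1.ge))
    obtain ⟨hdom, rs, hl, hmem, hreg⟩ := ih (A ⧸ Ideal.span {x}) hdim (by
      have hm : Ideal.span ((t.image (Ideal.Quotient.mk (Ideal.span {x})) : Finset _) : Set _) =
          IsLocalRing.maximalIdeal (A ⧸ Ideal.span {x}) := by
        rw [← hmap, ← hspan, Ideal.map_sup, Ideal.map_quotient_self, bot_sup_eq, Ideal.map_span,
          Finset.coe_image]
      refine ⟨_, le_antisymm ?_ ?_, hm⟩
      · exact Finset.card_image_le.trans (by omega)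
      · have h1 := ringKrullDim_le_spanFinrank_maximalIdeal (A ⧸ Ideal.span {x})
        rw [hdim] at h1
        have h2 : d ≤ (IsLocalRing.maximalIdeal (A ⧸ Ideal.span {x})).spanFinrank := by
          exact_mod_cast h1
        refine h2.trans ?_
        rw [← hm]
        exact (Submodule.spanFinrank_span_le_ncard_of_finite (Finset.finite_toSet _)).trans
          (by rw [Set.ncard_coe_finset]))
    have hprime : (Ideal.span {x}).IsPrime := (Ideal.Quotient.isDomain_iff_prime _).mp hdom
    have hdomA : IsDomain A := by
      obtain ⟨p, hp, hpx⟩ := Ideal.exists_minimalPrimes_le (I := ⊥) (J := Ideal.span {x}) bot_le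
      have hpp : p.IsPrime := hp.1.1
      have : p = ⊥ := by
        refine Submodule.eq_bot_of_le_smul_of_le_jacobson_bot (IsLocalRing.maximalIdeal A) _
          (IsNoetherian.noetherian _) ?_ (IsLocalRing.maximalIdeal_le_jacobson _)
        intro y hy
        obtain ⟨z, rfl⟩ := Ideal.mem_span_singleton'.mp (hpx hy)
        rw [smul_eq_mul, mul_comm z]
        refine Ideal.mul_mem_mul hx ((hpp.mem_or_mem hy).resolve_right (hxp p hp))
      subst this
      exact IsDomain.of_bot_isPrime A
    refine ⟨hdomA, ?_⟩
    obtain ⟨rs', rfl⟩ : ∃ rs' : List A, rs'.map (Ideal.Quotient.mk (Ideal.span {x})) = rs := 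
      List.map_surjective_iff.mpr Ideal.Quotient.mk_surjective rs
    have hx0 : x ≠ 0 := by
      rintro rfl; exact hx2 (Ideal.zero_mem _)
    have hmem' : ∀ y ∈ x :: rs', y ∈ IsLocalRing.maximalIdeal A := by
      intro y hy
      rcases List.mem_cons.mp hy with rfl | hy
      · exact hx
      · have h1 := hmem _ (List.mem_map_of_mem hy)
        intro hu
        exact h1 (hu.map _)
    refine ⟨x :: rs', by simpa using hl, hmem', ?_⟩
    refine _root_.RingTheory.Sequence.IsRegular.of_isWeaklyRegular_of_mem_maximalIdeal A hmem' ?_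
    refine IsWeaklyRegular.cons (fun a b hab => mul_left_cancel₀ hx0 hab) ?_
    have h3 : IsWeaklyRegular (A ⧸ Ideal.span {x}) rs' :=
      (isWeaklyRegular_map_algebraMap_iff (R := A) (S := A ⧸ Ideal.span {x}) _ rs').mp hreg.1
    exact (LinearEquiv.isWeaklyRegular_congr (Submodule.quotEquivOfEq _ _ (by 
          rw [← Submodule.ideal_span_singleton_smul]; simp)) _).mp h3

end Aux

/-- if `(A, m)` is a regular local ring of dimension `n = m + 1 ≥ 2`,
`f₁, …, f_{n-1}` is a regular sequence in `m`, and `I = (f₁, …, f_{n-1})`, then for every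
`r ≥ 2` the module `A/(I^r + (f₁^{r-1}))` has depth `1`. -/
theorem depth_quotient_power_regular_sequence_eq_one
    (A : Type*) [CommRing A] [IsNoetherianRing A] [IsLocalRing A]
    (m : ℕ) (hm : 1 ≤ m)
    (hdim : ringKrullDim A = (m + 1 : ℕ))
    (hregular : ∃ s : Finset A, s.card = m + 1 ∧
      Ideal.span (s : Set A) = IsLocalRing.maximalIdeal A)
    (f : Fin m → A) (hfm : ∀ i, f i ∈ IsLocalRing.maximalIdeal A)
    (hf : RingTheory.Sequence.IsRegular A (List.ofFn f))
    (I : Ideal A) (hI : I = Ideal.span (Set.range f))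
    (r : ℕ) (hr : 2 ≤ r) :
    regSeqDepth A (IsLocalRing.maximalIdeal A)
      (A ⧸ (I ^ r ⊔ Ideal.span {f ⟨0, hm⟩ ^ (r - 1)})) = 1 := by
  classical
  obtain ⟨m, rfl⟩ : ∃ k, m = k + 1 := ⟨m - 1, by omega⟩
  set J := I ^ r ⊔ Ideal.span {f ⟨0, hm⟩ ^ (r - 1)} with hJ
  have hIl : I = Ideal.ofList (List.ofFn f) := by
    rw [hI, Ideal.ofList]; congr 1; ext y; rw [Set.mem_setOf_eq, List.mem_ofFn]; rfl
  have hmemf : ∀ y ∈ List.ofFn f, y ∈ IsLocalRing.maximalIdeal A := by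
    intro y hy
    obtain ⟨i, rfl⟩ := List.mem_ofFn.mp hy
    exact hfm i
  have hIm : I ≤ IsLocalRing.maximalIdeal A := by
    rw [hI, Ideal.span_le]; rintro _ ⟨i, rfl⟩; exact hfm i
  have hJI : J ≤ I := by
    refine sup_le (Ideal.pow_le_self (by omega)) ?_
    rw [Ideal.span_singleton_le_iff_mem]
    exact Ideal.pow_mem_of_mem _ (hI ▸ Ideal.subset_span ⟨_, rfl⟩) _ (by omega)
  have hJne : J ≠ ⊤ := fun h => (IsLocalRing.maximalIdeal.isMaximal A).ne_top
    (top_le_iff.mp (h ▸ hJI.trans hIm))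
  have hnt : Nontrivial (A ⧸ J) := Ideal.Quotient.nontrivial_iff.mpr hJne
  -- dimension
  have hdimI : ringKrullDim (A ⧸ I) = 1 := by
    have h1 := ringKrullDim_add_length_eq_ringKrullDim_of_isRegular _ hf
    rw [← hIl, hdim, List.length_ofFn, Nat.cast_add (m + 1) 1, add_comm ((m + 1 : ℕ) : WithBot ℕ∞),
      Nat.cast_one] at h1
    exact le_antisymm (ENat.WithBot.add_le_add_natCast_right_iff.mp h1.le)
      (ENat.WithBot.add_le_add_natCast_right_iff.mp h1.ge)
  have hdimJ : Module.supportDim A (A ⧸ J) = 1 := by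
    rw [← hdimI, ← Module.supportDim_quotient_eq_ringKrullDim]
    have : Module.support A (A ⧸ J) = Module.support A (A ⧸ I) := by
      rw [Module.support_eq_zeroLocus, Module.support_eq_zeroLocus, Ideal.annihilator_quotient,
        Ideal.annihilator_quotient]
      refine subset_antisymm ?_ (PrimeSpectrum.zeroLocus_anti_mono_ideal hJI)
      rw [← PrimeSpectrum.zeroLocus_pow I (show r ≠ 0 by omega)]
      exact PrimeSpectrum.zeroLocus_anti_mono_ideal le_sup_left
    rw [Module.supportDim, Module.supportDim, this]
  have hub : ∀ rs : List A, RingTheory.Sequence.IsRegular (A ⧸ J) rs → rs.length ≤ 1 := by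
    intro rs hrs
    have h1 := Module.supportDim_add_length_eq_supportDim_of_isRegular rs hrs
    have h2 : Nontrivial ((A ⧸ J) ⧸ (Ideal.ofList rs • (⊤ : Submodule A (A ⧸ J)))) :=
      hrs.quot_ofList_smul_nontrivial ⊤
    have h3 : 0 ≤ Module.supportDim A ((A ⧸ J) ⧸ (Ideal.ofList rs • (⊤ : Submodule A (A ⧸ J)))) := by
      have := Module.supportDim_ne_bot_of_nontrivial A
        ((A ⧸ J) ⧸ (Ideal.ofList rs • (⊤ : Submodule A (A ⧸ J))))
      obtain ⟨z, hz⟩ := WithBot.ne_bot_iff_exists.mp this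
      rw [← hz]
      exact_mod_cast zero_le
    have h4 : ((rs.length : ℕ) : WithBot ℕ∞) ≤ 1 := by
      rw [← hdimJ, ← h1]
      exact le_add_of_nonneg_left h3
    exact_mod_cast h4
  -- a regular element
  obtain ⟨-, rs, hrl, hrm, hrr⟩ := aux_regular (m + 1 + 1) A hdim hregular
  obtain ⟨x, hx, hxr⟩ := aux_exists rs (List.ofFn f) hrm hrr hf (by simp [hrl])
  have hreg : IsSMulRegular (A ⧸ J) x := by
    rw [isSMulRegular_iff_right_eq_zero_of_smul]
    intro y hy
    obtain ⟨a, rfl⟩ := Ideal.Quotient.mk_surjective y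
    have h1 : x • a ∈ J := by
      rw [← Ideal.Quotient.eq_zero_iff_mem]; exact hy
    rw [Ideal.Quotient.eq_zero_iff_mem]
    rw [List.ofFn_succ] at hxr hIl hmemf
    have := aux_final (f 0) _ x (by
      intro y hy
      rcases List.mem_append.mp hy with hy | hy
      · exact hmemf y hy
      · rw [List.mem_singleton.mp hy]; exact hx) hxr (r - 1) r a
    rw [← hIl] at this
    exact this h1
  refine le_antisymm (csSup_le' ?_) (le_csSup ⟨1, ?_⟩ ?_)
  · rintro d ⟨rs, rfl, -, h⟩; exact hub rs h
  · rintro d ⟨rs, rfl, -, h⟩; exact hub rs h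
  · refine ⟨[x], rfl, by simpa using hx, ?_⟩
    exact _root_.RingTheory.Sequence.IsRegular.of_isWeaklyRegular_of_mem_maximalIdeal _
      (by simpa using hx) ((RingTheory.Sequence.isWeaklyRegular_singleton_iff _ _).mpr hreg)
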